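/- Let s ≥ 2 and n = 2s − 1. Let u₀, u₁, …, u_{s−1} and v₀, v₁, …, v_{s−1} be real numbers with u₀ ≥ u₁ ≥ … ≥ u_{s−1} ≥ 0 and v₀ ≥ v₁ ≥ … ≥ v_{s−1} ≥ 0. Define the symmetric circulant matrices U = C(u₀, u₁, …, u_{s−1}, u_{s−1}, …, u₁) and V = C(v₀, v₁, …, v_{s−1}, v_{s−1}, …, v₁). Then the product R = U V is a symmetric circulant matrix, R = C(r₀, r₁, …, r_{s−1}, r_{s−1}, …, r₁) for some real numbers r₀, …, r_{s−1}, and these satisfy r₀ ≥ r₁ ≥ … ≥ r_{s−1} ≥ 0. -/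

import Mathlib

open Matrix Finset

/-- The circulant matrix `C(m₀,…,m_{n-1})` whose `(i,j)` entry is `m_{(j-i) mod n}`. -/
def Cmat {n : ℕ} (m : Fin n → ℝ) : Matrix (Fin n) (Fin n) ℝ :=
  Matrix.of fun i j => m (j - i)

/-- Generator of the symmetric circulant matrix `C(w₀,…,w_{s-1},…)`:
the entry at circular position `k` is `w_{min(k, n-k)}`. -/
def ringGen (n : ℕ) (w : ℕ → ℝ) : Fin n → ℝ :=
  fun k => w (min k.val (n - k.val))

/-!
The generating vector of the product is the circular convolution `h` of the even vectors `f` and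
`g` that generate the factors. Writing `h k` and `h (k + 1)` each in two ways, related by the
reflection of the cycle that exchanges `k` and `k + 1`, gives
`2 (h k - h (k + 1)) = ∑ x, (f (k - x) - f (k + 1 + x)) * (g x - g (x + 1))`.
For `k` in the first half of the cycle, `k - x` is at least as close to `0` as `k + 1 + x` when `x`
lies in the first half, and at most as close when `x` lies in the second half. The case `k = 0`
compares `x` with `x + 1` in the same way, so the two factors of every summand have the same sign.
-/

theorem antitoneOn_Iic_iff_forall_add_one_le {α : Type*} [Preorder α] {f : ℕ → α} {m : ℕ} :
    AntitoneOn f (Set.Iic m) ↔ ∀ k, k + 1 ≤ m → f (k + 1) ≤ f k :=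
  ⟨fun hf k hk => hf (k.le_succ.trans hk) hk k.le_succ,
    fun hf => antitoneOn_of_add_one_le Set.ordConnected_Iic fun k _ _ hk => hf k hk⟩

section Convolution

variable {G R : Type*} [AddCommGroup G] [Fintype G]

theorem even_circulant_mulVec [NonUnitalNonAssocSemiring R] {f g : G → R}
    (hf : f.Even) (hg : g.Even) : (circulant f *ᵥ g).Even := fun k =>
  Fintype.sum_equiv (Equiv.neg G) _ _ fun x => by
    simp only [circulant_apply, Equiv.neg_apply, hg.eq]
    rw [← hf.eq, neg_sub', neg_neg]

theorem circulant_mulVec_apply_eq_sum_add [NonUnitalNonAssocSemiring R] {f g : G → R}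
    (hg : g.Even) (k : G) : (circulant f *ᵥ g) k = ∑ x, f (k + x) * g x :=
  Fintype.sum_equiv (Equiv.neg G) _ _ fun x => by
    simp only [circulant_apply, Equiv.neg_apply, hg.eq, sub_eq_add_neg]

theorem two_nsmul_circulant_mulVec_sub [NonUnitalNonAssocRing R] {f g : G → R}
    (hg : g.Even) (k d : G) :
    2 • ((circulant f *ᵥ g) k - (circulant f *ᵥ g) (k + d)) =
      ∑ x, (f (k - x) - f (k + d + x)) * (g x - g (x + d)) := by
  have at_k : (circulant f *ᵥ g) k = ∑ x, f (k - x) * g x := rfl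
  have at_k_reflected : (circulant f *ᵥ g) k = ∑ x, f (k + d + x) * g (x + d) := by
    rw [circulant_mulVec_apply_eq_sum_add hg, ← Equiv.sum_comp (Equiv.addRight d)]
    simp only [Equiv.coe_addRight, add_comm, add_left_comm]
  have at_k_add : (circulant f *ᵥ g) (k + d) = ∑ x, f (k - x) * g (x + d) := by
    refine (Equiv.sum_comp (Equiv.addRight d) _).symm.trans ?_
    simp only [Equiv.coe_addRight, circulant_apply, add_sub_add_right_eq_sub]
  have at_k_add_reflected := circulant_mulVec_apply_eq_sum_add (f := f) hg (k + d)
  simp only [sub_mul, mul_sub, sum_sub_distrib]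
  rw [← at_k, ← at_k_reflected, ← at_k_add, ← at_k_add_reflected]
  abel

end Convolution

section Circulant

variable {n : ℕ} [NeZero n] {f g : Fin n → ℝ}

theorem Cmat_eq_circulant (hf : f.Even) : Cmat f = circulant f := by
  ext i j
  change f (j - i) = f (i - j)
  rw [← hf.eq, neg_sub]

theorem Cmat_mul_Cmat (hf : f.Even) (hg : g.Even) :
    Cmat f * Cmat g = Cmat (circulant f *ᵥ g) := by
  rw [Cmat_eq_circulant hf, Cmat_eq_circulant hg, Cmat_eq_circulant (even_circulant_mulVec hf hg),
    circulant_mul]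

end Circulant

/-- The distance from `k` to `0` along the cycle `0, 1, …, n - 1, 0`; the vector `ringGen n w` is
`w` composed with this distance. -/
def ringDist {n : ℕ} (k : Fin n) : ℕ :=
  min k.val (n - k.val)

section RingDist

variable {n : ℕ}

theorem ringDist_le_half (k : Fin n) : ringDist k ≤ n / 2 := by
  unfold ringDist
  omega

theorem fin_val_sub_eq_ite (k x : Fin n) :
    (k - x).val = if x ≤ k then k.val - x.val else n + k.val - x.val := by
  split_ifs with h
  · exact Fin.coe_sub_iff_le.2 h
  · exact Fin.coe_sub_iff_lt.2 (not_le.1 h)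

variable [NeZero n]

theorem fin_val_add_one_add_eq_ite (k x : Fin n) :
    (k + 1 + x).val =
      if n ≤ k.val + 1 + x.val then k.val + 1 + x.val - n else k.val + 1 + x.val := by
  have val_eq_mod : (k + 1 + x).val = (k.val + 1 + x.val) % n := by
    simp [Fin.val_add]
  rw [val_eq_mod]
  split_ifs with h
  · rw [Nat.mod_eq_sub_mod h, Nat.mod_eq_of_lt (by omega)]
  · exact Nat.mod_eq_of_lt (not_le.1 h)

theorem ringDist_neg (k : Fin n) : ringDist (-k) = ringDist k := by
  unfold ringDist
  rw [Fin.val_neg]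
  split_ifs with hk
  · simp [hk]
  · omega

theorem ofNat_ringDist_eq_or_eq_neg (k : Fin n) :
    Fin.ofNat n (ringDist k) = k ∨ Fin.ofNat n (ringDist k) = -k := by
  rcases min_choice k.val (n - k.val) with h | h
  · exact .inl (Fin.ext (by rw [ringDist, h, Fin.val_ofNat, Nat.mod_eq_of_lt k.isLt]))
  · exact .inr (Fin.ext (by rw [ringDist, h, Fin.val_ofNat, Fin.val_neg']))

theorem ringDist_sub_le_ringDist_add_one_add {k x : Fin n}
    (hk : 2 * k.val + 1 ≤ n) (hx : 2 * x.val + 1 ≤ n) :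
    ringDist (k - x) ≤ ringDist (k + 1 + x) := by
  unfold ringDist
  grind [fin_val_sub_eq_ite k x, fin_val_add_one_add_eq_ite k x]

theorem ringDist_add_one_add_le_ringDist_sub {k x : Fin n}
    (hk : 2 * k.val + 1 ≤ n) (hx : n ≤ 2 * x.val + 1) :
    ringDist (k + 1 + x) ≤ ringDist (k - x) := by
  unfold ringDist
  grind [fin_val_sub_eq_ite k x, fin_val_add_one_add_eq_ite k x]

end RingDist

section RingGen

variable {n : ℕ} {u v w : ℕ → ℝ}

theorem ringGen_le_ringGen (hw : AntitoneOn w (Set.Iic (n / 2))) {k l : Fin n}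
    (hkl : ringDist k ≤ ringDist l) : ringGen n w l ≤ ringGen n w k :=
  hw (ringDist_le_half k) (ringDist_le_half l) hkl

theorem ringGen_nonneg (hw : AntitoneOn w (Set.Iic (n / 2))) (hw0 : 0 ≤ w (n / 2)) (k : Fin n) :
    0 ≤ ringGen n w k :=
  hw0.trans (hw (ringDist_le_half k) Set.self_mem_Iic (ringDist_le_half k))

variable [NeZero n]

theorem ringGen_even (w : ℕ → ℝ) : (ringGen n w).Even := fun k =>
  congrArg w (ringDist_neg k)

theorem ringGen_comp_ofNat {f : Fin n → ℝ} (hf : f.Even) :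
    ringGen n (fun k => f (Fin.ofNat n k)) = f := by
  ext k
  change f (Fin.ofNat n (ringDist k)) = f k
  rcases ofNat_ringDist_eq_or_eq_neg k with h | h
  · rw [h]
  · rw [h, hf.eq]

theorem ringGen_sub_mul_ringGen_sub_nonneg
    (hu : AntitoneOn u (Set.Iic (n / 2))) (hv : AntitoneOn v (Set.Iic (n / 2)))
    {k : Fin n} (hk : 2 * k.val + 1 ≤ n) (x : Fin n) :
    0 ≤ (ringGen n u (k - x) - ringGen n u (k + 1 + x)) *
      (ringGen n v x - ringGen n v (x + 1)) := by
  have zero_le_half : 2 * (0 : Fin n).val + 1 ≤ n := by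
    simpa using NeZero.one_le (n := n)
  have ringGen_eq : ringGen n v x = ringGen n v (0 - x) := by
    rw [zero_sub, (ringGen_even v).eq]
  have ringGen_add_one_eq : ringGen n v (x + 1) = ringGen n v (0 + 1 + x) := by
    rw [zero_add, add_comm]
  rw [ringGen_eq, ringGen_add_one_eq]
  rcases le_total (2 * x.val + 1) n with hx | hx
  · exact mul_nonneg
      (sub_nonneg.2 (ringGen_le_ringGen hu (ringDist_sub_le_ringDist_add_one_add hk hx)))
      (sub_nonneg.2 (ringGen_le_ringGen hv (ringDist_sub_le_ringDist_add_one_add zero_le_half hx)))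
  · exact mul_nonneg_of_nonpos_of_nonpos
      (sub_nonpos.2 (ringGen_le_ringGen hu (ringDist_add_one_add_le_ringDist_sub hk hx)))
      (sub_nonpos.2 (ringGen_le_ringGen hv (ringDist_add_one_add_le_ringDist_sub zero_le_half hx)))

theorem circulant_ringGen_mulVec_add_one_le
    (hu : AntitoneOn u (Set.Iic (n / 2))) (hv : AntitoneOn v (Set.Iic (n / 2)))
    {k : Fin n} (hk : 2 * k.val + 1 ≤ n) :
    (circulant (ringGen n u) *ᵥ ringGen n v) (k + 1) ≤
      (circulant (ringGen n u) *ᵥ ringGen n v) k := by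
  rw [← sub_nonneg, ← nsmul_nonneg_iff two_ne_zero,
    two_nsmul_circulant_mulVec_sub (ringGen_even v)]
  exact sum_nonneg fun x _ => ringGen_sub_mul_ringGen_sub_nonneg hu hv hk x

theorem antitoneOn_circulant_ringGen_mulVec
    (hu : AntitoneOn u (Set.Iic (n / 2))) (hv : AntitoneOn v (Set.Iic (n / 2))) :
    AntitoneOn (fun k => (circulant (ringGen n u) *ᵥ ringGen n v) (Fin.ofNat n k))
      (Set.Iic (n / 2)) := by
  rw [antitoneOn_Iic_iff_forall_add_one_le]
  intro k hk
  have val_ofNat : (Fin.ofNat n k).val = k := Nat.mod_eq_of_lt (by omega)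
  have ofNat_add_one : Fin.ofNat n (k + 1) = Fin.ofNat n k + 1 := by
    ext
    simp [Fin.val_add]
  rw [ofNat_add_one]
  exact circulant_ringGen_mulVec_add_one_le hu hv (by omega)

end RingGen

theorem circulant_product_monotone_general (n : ℕ) [NeZero n] (u v : ℕ → ℝ)
    (hu : AntitoneOn u (Set.Iic (n / 2))) (hu0 : 0 ≤ u (n / 2))
    (hv : AntitoneOn v (Set.Iic (n / 2))) (hv0 : 0 ≤ v (n / 2)) :
    ∃ r : ℕ → ℝ,
      Cmat (ringGen n u) * Cmat (ringGen n v) = Cmat (ringGen n r) ∧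
      AntitoneOn r (Set.Iic (n / 2)) ∧ 0 ≤ r (n / 2) := by
  refine ⟨fun k => (circulant (ringGen n u) *ᵥ ringGen n v) (Fin.ofNat n k), ?_,
    antitoneOn_circulant_ringGen_mulVec hu hv, ?_⟩
  · have hueven : (ringGen n u).Even := ringGen_even u
    have hveven : (ringGen n v).Even := ringGen_even v
    rw [ringGen_comp_ofNat (even_circulant_mulVec hueven hveven), Cmat_mul_Cmat hueven hveven]
  · exact dotProduct_nonneg_of_nonneg (fun _ => ringGen_nonneg hu hu0 _) (ringGen_nonneg hv hv0)

/-- Products of nonnegative monotone symmetric circulant matrices (odd size) are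
symmetric circulant with nonnegative monotone generating entries. -/
theorem circulant_product_monotone
    (s n : ℕ) (hs : 2 ≤ s) (hn : n = 2 * s - 1)
    (u v : ℕ → ℝ)
    (humono : ∀ k : ℕ, k + 1 ≤ s - 1 → u (k + 1) ≤ u k) (hu0 : 0 ≤ u (s - 1))
    (hvmono : ∀ k : ℕ, k + 1 ≤ s - 1 → v (k + 1) ≤ v k) (hv0 : 0 ≤ v (s - 1)) :
    ∃ r : ℕ → ℝ,
      Cmat (ringGen n u) * Cmat (ringGen n v) = Cmat (ringGen n r) ∧
      (∀ k : ℕ, k + 1 ≤ s - 1 → r (k + 1) ≤ r k) ∧ 0 ≤ r (s - 1) := by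
  have : NeZero n := ⟨by omega⟩
  have half_eq : s - 1 = n / 2 := by omega
  simp only [half_eq, ← antitoneOn_Iic_iff_forall_add_one_le] at humono hu0 hvmono hv0 ⊢
  exact circulant_product_monotone_general n u v humono hu0 hvmono hv0
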